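/- If a Sturmian shift X ⊆ {0,1}^ℤ is the generic limit set of some cellular automaton, then its language L(X) is Δ⁰₂, i.e., both Σ⁰₂ and Π⁰₂. -/

import Mathlib

open Filter Set Function

namespace Gls

variable {A : Type*}

/-- The left shift map on `A^ℤ`. -/
def shift (x : ℤ → A) : ℤ → A := fun i => x (i + 1)

/-- A cellular automaton: a continuous shift-commuting self-map of the full shift. -/
def IsCA [TopologicalSpace A] (f : (ℤ → A) → (ℤ → A)) : Prop :=
  Continuous f ∧ f ∘ shift = shift ∘ f

/-- The set of limit points of the forward orbit of `x` under `f`. -/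
def omegaSet [TopologicalSpace A] (f : (ℤ → A) → (ℤ → A)) (x : ℤ → A) : Set (ℤ → A) :=
  {y | MapClusterPt y atTop fun t => f^[t] x}

/-- The realm of attraction of `Y`. -/
def realm [TopologicalSpace A] (f : (ℤ → A) → (ℤ → A)) (Y : Set (ℤ → A)) : Set (ℤ → A) :=
  {x | omegaSet f x ⊆ Y}

/-- The generic limit set: the intersection of all closed sets whose realm is comeager. -/
def genLimitSet [TopologicalSpace A] (f : (ℤ → A) → (ℤ → A)) : Set (ℤ → A) :=
  ⋂₀ {C | IsClosed C ∧ realm f C ∈ residual (ℤ → A)}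

/-- The word `x_{[i, i+n)}` of length `n` read in the configuration `x` from position `i`. -/
def word (x : ℤ → A) (i : ℤ) (n : ℕ) : List A :=
  (List.range n).map fun k => x (i + k)

/-- The cylinder set `[w]_i`. -/
def cylinder (w : List A) (i : ℤ) : Set (ℤ → A) := {x | word x i w.length = w}

/-- The language of `X`: all finite words occurring in points of `X`. -/
def lang (X : Set (ℤ → A)) : Set (List A) :=
  {w | ∃ x ∈ X, ∃ i : ℤ, word x i w.length = w}


/-- The arithmetical hierarchy over `ℕ`: `NatSigma 0` is the class of computable
predicates, and a predicate is `NatSigma (n+1)` (i.e. `Σ⁰ₙ₊₁`) if it is of the form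
`{a | ∃ k, (a, k) ∈ R}` for a `Π⁰ₙ` relation `R` (i.e. a relation whose complement is `Σ⁰ₙ`). -/
def NatSigma : ℕ → (ℕ → Prop) → Prop
  | 0 => fun P => ComputablePred P
  | (n + 1) => fun P =>
      ∃ R : ℕ → Prop, NatSigma n (fun a => ¬ R a) ∧ ∀ a, P a ↔ ∃ k, R (Nat.pair a k)

/-- A set of words is `Σ⁰ₙ` if, identifying words with natural numbers via the canonical
computable encoding, it is a `Σ⁰ₙ` subset of `ℕ`. -/
def SigmaLang {A : Type*} [Primcodable A] (n : ℕ) (P : Set (List A)) : Prop :=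
  NatSigma n (fun m => ∃ w : List A, Encodable.encode w = m ∧ w ∈ P)

/-- A set of words is `Π⁰ₙ` if its complement is `Σ⁰ₙ`. -/
def PiLang {A : Type*} [Primcodable A] (n : ℕ) (P : Set (List A)) : Prop :=
  SigmaLang n {w | w ∉ P}

/-!
Let `X` be a Sturmian shift. Compactness gives two points of `X` that agree on the negative
coordinates and differ at `0`, and since there is only one right special word of each length, this
leaves two possibilities. Either every point of `X` contains every word of `X`, or `X` contains a
configuration that is eventually periodic on both sides but not periodic, and this configuration
contains every word of `X`.

In the second case the language is even computably enumerable. In the first case, suppose that `X`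
is the generic limit set of a cellular automaton `f`. By the Baire category theorem a word `s`
belongs to the language iff there are a cylinder and a time `T` such that from `T` on, `s` occurs
in the window of the cylinder in every image of every point of the cylinder. For each time this is
a statement about finitely many words, so the language is `Σ⁰₂`. Finally, knowing that there are
`n + 1` words of length `n`, one certifies that a word does not belong to the language by
exhibiting `n + 1` other words of the same length that do, so the complement is `Σ⁰₂` as well.
-/

/-! ### Words and languages -/

theorem word_eq_map (x : ℤ → A) (i : ℤ) (n : ℕ) :
    word x i n = (List.range n).map fun k : ℕ => x (i + k) := by
  have hcoe : (do let k ← List.range n; pure (k : ℤ)) = (List.range n).map fun k : ℕ => (k : ℤ) :=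
    List.flatMap_pure_eq_map _ _
  unfold word
  rw [hcoe, List.map_map]
  rfl

@[simp]
theorem length_word (x : ℤ → A) (i : ℤ) (n : ℕ) : (word x i n).length = n := by
  simp [word_eq_map]

theorem getElem_word (x : ℤ → A) (i : ℤ) (n k : ℕ) (hk : k < (word x i n).length) :
    (word x i n)[k] = x (i + k) := by
  simp [word_eq_map]

theorem word_eq_word_iff {x y : ℤ → A} {i j : ℤ} {n : ℕ} :
    word x i n = word y j n ↔ ∀ k < n, x (i + k) = y (j + k) := by
  simp [word_eq_map]

theorem word_append (x : ℤ → A) (i : ℤ) (m n : ℕ) :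
    word x i m ++ word x (i + m) n = word x i (m + n) := by
  simp [word_eq_map, List.range_add, Function.comp_def, add_assoc]

theorem word_succ (x : ℤ → A) (i : ℤ) (n : ℕ) : word x i (n + 1) = word x i n ++ [x (i + n)] := by
  rw [← word_append]
  simp [word_eq_map]

theorem word_infix_word (x : ℤ → A) {i j : ℤ} {m n : ℕ} (hi : j ≤ i) (hj : i + m ≤ j + n) :
    word x i m <:+: word x j n := by
  obtain ⟨k, rfl⟩ := Int.le.dest hi
  obtain ⟨l, rfl⟩ : ∃ l, n = k + m + l := Nat.exists_eq_add_of_le (by omega)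
  exact ⟨word x j k, word x (j + (k + m : ℕ)) l, by
    rw [word_append, word_append]⟩

theorem infix_word_iff {s : List A} {x : ℤ → A} {i : ℤ} {n : ℕ} :
    s <:+: word x i n ↔ ∃ k, i ≤ k ∧ k + s.length ≤ i + n ∧ word x k s.length = s := by
  refine ⟨?_, fun ⟨k, hik, hkn, hs⟩ => hs ▸ word_infix_word x hik (by simpa [hs] using hkn)⟩
  rintro ⟨u, v, huv⟩
  have hlen : u.length + s.length + v.length = n := by
    simpa [add_assoc] using congrArg List.length huv
  refine ⟨i + u.length, by omega, by omega, ?_⟩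
  rw [← hlen, ← word_append, ← word_append] at huv
  exact ((List.append_inj (List.append_inj huv (by simp)).1 (by simp)).2).symm

theorem exists_word_eq [Nonempty A] (u : List A) (i : ℤ) : ∃ x, word x i u.length = u := by
  inhabit A
  refine ⟨fun k => u.getD (k - i).toNat default, List.ext_getElem (by simp) fun k _ hk => ?_⟩
  simp [getElem_word, hk]

theorem isClopen_setOf_word [TopologicalSpace A] [DiscreteTopology A]
    (P : List A → Prop) (i : ℤ) (n : ℕ) : IsClopen {x : ℤ → A | P (word x i n)} := by
  have hcont : Continuous fun (x : ℤ → A) (k : Fin n) => x (i + k) := by fun_prop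
  have hword : ∀ x : ℤ → A, List.ofFn (fun k : Fin n => x (i + k)) = word x i n := fun x =>
    List.ext_getElem (by simp) (by simp [getElem_word])
  simpa only [preimage_ofPred_eq, hword] using
    (isClopen_discrete {w : Fin n → A | P (List.ofFn w)}).preimage hcont

theorem comp_add_mem_of_image_shift_eq {X : Set (ℤ → A)} (hX : shift '' X = X) {x : ℤ → A}
    (hx : x ∈ X) (a : ℤ) : (fun i => x (i + a)) ∈ X := by
  induction a using Int.induction_on with
  | zero => simpa using hx
  | succ a ih =>
    have hshift : (fun i => x (i + (a + 1))) = shift fun i => x (i + a) := by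
      funext i
      simp only [shift, add_right_comm, add_assoc]
    rw [hshift, ← hX]
    exact mem_image_of_mem shift ih
  | pred a ih =>
    obtain ⟨y, hy, hyx⟩ := hX.symm ▸ ih
    convert hy using 2 with i
    simpa only [shift, sub_add_cancel, sub_add_eq_add_sub, add_sub_assoc] using
      (congrFun hyx (i - 1)).symm

theorem word_mem_lang {X : Set (ℤ → A)} {x : ℤ → A} (hx : x ∈ X) (i : ℤ) (n : ℕ) :
    word x i n ∈ lang X :=
  ⟨x, hx, i, by rw [length_word]⟩

theorem mem_lang_of_infix {X : Set (ℤ → A)} {s t : List A} (hst : s <:+: t) (ht : t ∈ lang X) :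
    s ∈ lang X := by
  obtain ⟨x, hx, i, hi⟩ := ht
  obtain ⟨k, -, -, hk⟩ := infix_word_iff.1 (hi.symm ▸ hst)
  exact ⟨x, hx, k, hk⟩

/-! ### The Morse–Hedlund theorem -/

/-- The factor `u_{[i, i+n)}` of length `n` of a one-sided sequence `u`. The Morse–Hedlund
argument is run on one-sided sequences, as both halves of a configuration are read as such. -/
def factor (u : ℕ → A) (n i : ℕ) : List A :=
  (List.range n).map fun k => u (i + k)

theorem factor_eq_factor_iff {u : ℕ → A} {n i j : ℕ} :
    factor u n i = factor u n j ↔ ∀ k < n, u (i + k) = u (j + k) := by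
  simp [factor]

theorem finite_range_factor [Finite A] (u : ℕ → A) (n : ℕ) : (range (factor u n)).Finite :=
  (List.finite_length_eq A n).subset <| range_subset_iff.2 fun i => by simp [factor]

theorem exists_ncard_range_factor_succ_le (u : ℕ → A) {n : ℕ}
    (hn : (range (factor u n)).ncard ≤ n) :
    ∃ k < n, (range (factor u (k + 1))).ncard ≤ (range (factor u k)).ncard ∧
      (range (factor u (k + 1))).ncard ≤ k + 1 := by
  classical
  have hex : ∃ k, (range (factor u k)).ncard ≤ k := ⟨n, hn⟩
  have hle : Nat.find hex ≤ n := Nat.find_min' hex hn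
  obtain ⟨k, hk⟩ : ∃ k, Nat.find hex = k + 1 := Nat.exists_eq_succ_of_ne_zero fun h0 => by
    have hzero : range (factor u 0) = {[]} := by simp [Set.ext_iff, factor, eq_comm]
    simpa [h0, hzero] using Nat.find_spec hex
  have hspec : (range (factor u (k + 1))).ncard ≤ k + 1 := hk ▸ Nat.find_spec hex
  have hmin : ¬ (range (factor u k)).ncard ≤ k := Nat.find_min hex (by omega)
  exact ⟨k, by omega, by omega, hspec⟩

theorem factor_succ_eq_of_factor_eq [Finite A] {u : ℕ → A} {k : ℕ}
    (hk : (range (factor u (k + 1))).ncard ≤ (range (factor u k)).ncard) {i j : ℕ}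
    (hij : factor u k i = factor u k j) : factor u (k + 1) i = factor u (k + 1) j := by
  have htake : ∀ i, (factor u (k + 1) i).take k = factor u k i := fun i => by
    simp [factor, ← List.map_take, List.take_range]
  have himage : List.take k '' range (factor u (k + 1)) = range (factor u k) := by
    rw [← range_comp]
    exact congrArg range (funext htake)
  have hfin := finite_range_factor u (k + 1)
  have hinj : InjOn (List.take k) (range (factor u (k + 1))) :=
    injOn_of_ncard_image_eq (himage ▸ hk.antisymm' (himage ▸ ncard_image_le hfin)) hfin
  exact hinj (mem_range_self i) (mem_range_self j) (by rw [htake, htake, hij])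

theorem apply_add_eq_of_factor_eq {u : ℕ → A} {k : ℕ}
    (hdet : ∀ i j, factor u k i = factor u k j → factor u (k + 1) i = factor u (k + 1) j) {i j : ℕ}
    (hij : factor u k i = factor u k j) (m : ℕ) : u (i + m) = u (j + m) := by
  induction m generalizing i j with
  | zero => exact factor_eq_factor_iff.1 (hdet i j hij) 0 k.succ_pos
  | succ m ih =>
    have hnext : factor u k (i + 1) = factor u k (j + 1) := factor_eq_factor_iff.2 fun l hl => by
      simpa only [add_right_comm, add_assoc] using
        factor_eq_factor_iff.1 (hdet i j hij) (l + 1) (by omega)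
    simpa only [add_right_comm, add_assoc] using ih hnext

theorem apply_add_factorial_of_ncard_range_factor_le [Finite A] {u : ℕ → A} {n : ℕ}
    (hn : (range (factor u n)).ncard ≤ n) {t : ℕ} (ht : n ≤ t) : u (t + n.factorial) = u t := by
  obtain ⟨k, hkn, hle, hcard⟩ := exists_ncard_range_factor_succ_le u hn
  obtain ⟨i, -, j, hj, hij, heq⟩ : ∃ i ∈ Set.Iic (k + 1), ∃ j ∈ Set.Iic (k + 1), i < j ∧
      factor u (k + 1) i = factor u (k + 1) j := by
    obtain ⟨i, hi, j, hj, hne, heq⟩ := exists_ne_map_eq_of_ncard_lt_of_maps_to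
      (s := Set.Iic (k + 1)) (by rw [ncard_Iic_nat]; omega)
      (fun i _ => mem_range_self i) (finite_range_factor u (k + 1))
    rcases hne.lt_or_gt with hlt | hlt
    exacts [⟨i, hi, j, hj, hlt, heq⟩, ⟨j, hj, i, hi, hlt, heq.symm⟩]
  simp only [mem_Iic] at hj
  have hdet := fun a b => factor_succ_eq_of_factor_eq (i := a) (j := b) hle
  have hperiodic : Periodic (fun m => u (i + m)) (j - i) := fun m => by
    have hk : factor u k i = factor u k j :=
      factor_eq_factor_iff.2 fun l hl => factor_eq_factor_iff.1 heq l (by omega)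
    simpa only [show i + (m + (j - i)) = j + m by omega] using
      (apply_add_eq_of_factor_eq hdet hk m).symm
  obtain ⟨c, hc⟩ : j - i ∣ n.factorial := Nat.dvd_factorial (by omega) (by omega)
  have hmul := hperiodic.nat_mul c (t - i)
  simp only [Nat.cast_id] at hmul
  rwa [mul_comm, ← hc, show i + (t - i + n.factorial) = t + n.factorial by omega,
    show i + (t - i) = t by omega] at hmul

/-! ### Words of a Sturmian shift -/

/-- The complexity function of a Sturmian shift: there are exactly `n + 1` words of length `n`. -/
def HasSturmianComplexity (X : Set (ℤ → A)) : Prop :=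
  ∀ n : ℕ, {w ∈ lang X | w.length = n}.ncard = n + 1

/-- A right special word: one that can be followed by two different letters. -/
def IsRightSpecial (X : Set (ℤ → A)) (w : List A) : Prop :=
  ∃ a b, a ≠ b ∧ w ++ [a] ∈ lang X ∧ w ++ [b] ∈ lang X

/-- The configuration is periodic far to the left. -/
def LeftEventuallyPeriodic (x : ℤ → A) : Prop :=
  ∃ p : ℕ, 0 < p ∧ ∃ m : ℤ, ∀ i < m, x (i - p) = x i

/-- The configuration is periodic far to the right. -/
def RightEventuallyPeriodic (x : ℤ → A) : Prop :=
  ∃ p : ℕ, 0 < p ∧ ∃ m : ℤ, ∀ i ≥ m, x (i + p) = x i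

section Complexity

variable {X : Set (ℤ → A)}

theorem isRightSpecial_word {x y : ℤ → A} (hx : x ∈ X) (hy : y ∈ X) {i j : ℤ} {n : ℕ}
    (hword : word x i n = word y j n) (hne : x (i + n) ≠ y (j + n)) :
    IsRightSpecial X (word x i n) := by
  refine ⟨_, _, hne, ?_, ?_⟩
  · exact word_succ x i n ▸ word_mem_lang hx i (n + 1)
  · exact hword ▸ word_succ y j n ▸ word_mem_lang hy j (n + 1)

theorem exists_append_singleton_mem_lang {w : List A} (hw : w ∈ lang X) :
    ∃ a, w ++ [a] ∈ lang X := by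
  obtain ⟨x, hx, i, hi⟩ := hw
  refine ⟨x (i + w.length), ?_⟩
  nth_rw 1 [← hi]
  exact word_succ x i w.length ▸ word_mem_lang hx i (w.length + 1)

namespace HasSturmianComplexity

variable (hX : HasSturmianComplexity X)

include hX

theorem finite (n : ℕ) : {w ∈ lang X | w.length = n}.Finite :=
  finite_of_ncard_ne_zero (by rw [hX n]; omega)

/-- If `w` and `w'` differ, then `L_{n+1}` still maps onto `L_n` under deletion of the last letter
after one extension of each of them has been removed, which contradicts `|L_{n+1}| = |L_n| + 1`. -/
theorem isRightSpecial_unique {w w' : List A} (hw : IsRightSpecial X w)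
    (hw' : IsRightSpecial X w') (hlen : w.length = w'.length) : w = w' := by
  obtain ⟨a, b, hab, ha, hb⟩ := hw
  obtain ⟨a', b', hab', ha', hb'⟩ := hw'
  by_contra hne
  set n := w.length with hn
  set S := {v ∈ lang X | v.length = n + 1} \ {w ++ [a], w' ++ [a']} with hS
  have hmemS : ∀ {v c}, v ++ [c] ∈ lang X → v.length = n → v ++ [c] ≠ w ++ [a] →
      v ++ [c] ≠ w' ++ [a'] → v ∈ List.dropLast '' S := fun {v c} hv hvn h h' =>
    ⟨v ++ [c], ⟨⟨hv, by simp [hvn]⟩, by simp_all⟩, by simp⟩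
  have hsurj : {v ∈ lang X | v.length = n} ⊆ List.dropLast '' S := by
    rintro v ⟨hv, hvn⟩
    by_cases hvw : v = w
    · exact hvw ▸ hmemS hb hn.symm (by simp [hab.symm]) (by simp [hne])
    by_cases hvw' : v = w'
    · exact hvw' ▸ hmemS hb' hlen.symm (by simp [Ne.symm hne]) (by simp [hab'.symm])
    obtain ⟨c, hc⟩ := exists_append_singleton_mem_lang hv
    exact hmemS hc hvn (by simp [hvw]) (by simp [hvw'])
  have hScard : S.ncard = n := by
    have hpair : {w ++ [a], w' ++ [a']} ⊆ {v ∈ lang X | v.length = n + 1} :=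
      pair_subset ⟨ha, by simp [hn]⟩ ⟨ha', by simp [hlen]⟩
    rw [hS, ncard_sdiff hpair, hX, ncard_pair (by simp [hne])]
    omega
  have hSfin : S.Finite := (hX.finite _).sdiff
  have hle := (ncard_le_ncard hsurj (hSfin.image _)).trans (ncard_image_le hSfin)
  rw [hX, hScard] at hle
  omega

theorem exists_isRightSpecial (n : ℕ) : ∃ w, w.length = n ∧ IsRightSpecial X w := by
  obtain ⟨v, hv, v', hv', hne, heq⟩ := exists_ne_map_eq_of_ncard_lt_of_maps_to
    (f := List.dropLast) (s := {w ∈ lang X | w.length = n + 1}) (t := {w ∈ lang X | w.length = n})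
    (by rw [hX, hX]; omega)
    (fun v hv => ⟨mem_lang_of_infix (List.dropLast_prefix v).isInfix hv.1, by simp [hv.2]⟩)
    (hX.finite n)
  have hnil : ∀ {l : List A}, l.length = n + 1 → l ≠ [] := List.ne_nil_of_length_eq_add_one
  obtain ⟨w, a, rfl⟩ := List.eq_nil_or_concat' v |>.resolve_left (hnil hv.2)
  obtain ⟨w', b, rfl⟩ := List.eq_nil_or_concat' v' |>.resolve_left (hnil hv'.2)
  simp only [List.dropLast_concat] at heq
  subst heq
  exact ⟨w, by simpa using hv.2, a, b, by simpa using hne, hv.1, hv'.1⟩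

theorem ncard_range_le_of_ne {s : List A} (hs : s ∈ lang X) {g : ℕ → List A}
    (hg : ∀ k, g k ∈ lang X ∧ (g k).length = s.length ∧ g k ≠ s) :
    (range g).ncard ≤ s.length := by
  have hsub : range g ⊆ {w ∈ lang X | w.length = s.length} \ {s} := by
    rintro _ ⟨k, rfl⟩
    exact ⟨⟨(hg k).1, (hg k).2.1⟩, (hg k).2.2⟩
  refine (ncard_le_ncard hsub (hX.finite _).sdiff).trans ?_
  have hmem : s ∈ {w ∈ lang X | w.length = s.length} := ⟨hs, rfl⟩
  rw [ncard_sdiff_singleton_of_mem hmem, hX, Nat.add_sub_cancel]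

variable [Finite A] {x : ℤ → A} {s : List A}

theorem apply_add_factorial_eq (hx : x ∈ X) (hs : s ∈ lang X) {c : ℤ}
    (hne : ∀ i ≥ c, word x i s.length ≠ s) {i : ℤ} (hi : c + s.length ≤ i) :
    x (i + s.length.factorial) = x i := by
  set u : ℕ → A := fun k => x (c + k)
  have hfactor : ∀ k, factor u s.length k = word x (c + k) s.length := fun k => by
    simp [factor, u, word_eq_map, add_assoc]
  have hcard := hX.ncard_range_le_of_ne hs (g := factor u s.length) fun k => by
    rw [hfactor]
    exact ⟨word_mem_lang hx _ _, length_word .., hne _ (by omega)⟩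
  obtain ⟨k, rfl⟩ := Int.le.dest hi
  simpa [u, add_assoc] using
    apply_add_factorial_of_ncard_range_factor_le hcard (Nat.le_add_right s.length k)

theorem apply_sub_factorial_eq (hx : x ∈ X) (hs : s ∈ lang X) {c : ℤ}
    (hne : ∀ i ≤ c, word x i s.length ≠ s) {i : ℤ} (hi : i < c) :
    x (i - s.length.factorial) = x i := by
  set u : ℕ → A := fun k => x (c + s.length - 1 - k)
  have hfactor : ∀ k, factor u s.length k = (word x (c - k) s.length).reverse := fun k =>
    List.ext_getElem (by simp [factor]) fun l hl _ => by
      have hl : l < s.length := by simpa [factor] using hl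
      simp only [factor, u, List.getElem_map, List.getElem_range, List.getElem_reverse,
        getElem_word, length_word]
      congr 1
      omega
  have hcard := hX.ncard_range_le_of_ne hs (g := fun k => word x (c - k) s.length) fun k =>
    ⟨word_mem_lang hx _ _, length_word .., hne _ (by omega)⟩
  rw [← ncard_image_of_injective _ List.reverse_injective, ← range_comp] at hcard
  obtain ⟨k, hk⟩ := Int.le.dest (Int.add_one_le_of_lt hi)
  have hrange : factor u s.length = List.reverse ∘ fun k : ℕ => word x (c - k) s.length :=
    funext hfactor
  have hperiod := apply_add_factorial_of_ncard_range_factor_le (hrange ▸ hcard)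
    (Nat.le_add_right s.length k)
  convert hperiod using 2 <;> push_cast <;> omega

theorem periodic_of_notMem_lang (hx : x ∈ X) (hs : s ∈ lang X) (hsx : s ∉ lang {x}) :
    Periodic x s.length.factorial := fun i =>
  hX.apply_add_factorial_eq hx hs (c := i - s.length) (fun j _ h => hsx ⟨x, rfl, j, h⟩) (by simp)

end HasSturmianComplexity

end Complexity

/-! ### Minimality versus eventual periodicity -/

theorem exists_mem_eqOn_iUnion {ι : Type*} [TopologicalSpace A] [CompactSpace A] [T2Space A]
    {E : Set ((ι → A) × (ι → A))} (hE : IsClosed E) {I : ℕ → Set ι} (hI : Monotone I)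
    (h : ∀ n, ∃ q ∈ E, EqOn q.1 q.2 (I n)) : ∃ q ∈ E, EqOn q.1 q.2 (⋃ n, I n) := by
  have hclosed : ∀ n, IsClosed (E ∩ {q | EqOn q.1 q.2 (I n)}) := fun n => by
    simp only [EqOn, ofPred_forall]
    exact hE.inter <| isClosed_iInter fun i => isClosed_iInter fun _ =>
      isClosed_eq (by fun_prop) (by fun_prop)
  obtain ⟨q, hq⟩ := IsCompact.nonempty_iInter_of_sequence_nonempty_isCompact_isClosed
    (fun n => E ∩ {q | EqOn q.1 q.2 (I n)})
    (fun n => inter_subset_inter_right E fun q hq => EqOn.mono (hI n.le_succ) hq) h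
    (hclosed 0).isCompact hclosed
  rw [mem_iInter] at hq
  exact ⟨q, (hq 0).1, fun i hi => (mem_iUnion.1 hi).elim fun n hn => (hq n).2 hn⟩

theorem apply_zero_eq_of_periodic {x z : ℤ → A} {p q : ℕ} (hp : 0 < p) (hq : 0 < q)
    (hx : Periodic x p) (hz : Periodic z q) (hxz : EqOn x z (Iio 0)) : x 0 = z 0 := by
  have hneg : -((q : ℤ) * p) ∈ Iio 0 := by simp only [mem_Iio, neg_lt_zero]; positivity
  calc x 0 = x (-((q : ℤ) * p)) := by simpa using (hx.sub_int_mul_eq (x := 0) q).symm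
    _ = z (-((q : ℤ) * p)) := hxz hneg
    _ = z 0 := by rw [mul_comm]; simpa using hz.sub_int_mul_eq (x := 0) p

theorem LeftEventuallyPeriodic.congr {x z : ℤ → A} (hx : LeftEventuallyPeriodic x)
    (hxz : EqOn x z (Iio 0)) : LeftEventuallyPeriodic z := by
  obtain ⟨p, hp, m, hm⟩ := hx
  refine ⟨p, hp, min m 0, fun i hi => ?_⟩
  rw [← hxz (show i - p ∈ Iio 0 by simp only [mem_Iio]; omega),
    ← hxz (show i ∈ Iio 0 by simp only [mem_Iio]; omega), hm i (by omega)]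

theorem LeftEventuallyPeriodic.exists_period_break {x : ℤ → A} (hx : LeftEventuallyPeriodic x)
    (hper : ∀ p : ℕ, 0 < p → ¬ Periodic x p) :
    ∃ p : ℕ, 0 < p ∧ ∃ m : ℤ, x (m - p) ≠ x m ∧ ∀ i < m, x (i - p) = x i := by
  obtain ⟨p, hp, b, hb⟩ := hx
  have hbreak : ∃ m : ℤ, x (m - p) ≠ x m := by
    by_contra! hall
    exact hper p hp fun i => by simpa using (hall (i + p)).symm
  obtain ⟨m, hm, hmin⟩ := Int.exists_least_of_bdd
    ⟨b, fun i hi => not_lt.1 fun hib => hi (hb i hib)⟩ hbreak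
  exact ⟨p, hp, m, hm, fun i hi => not_not.1 fun h => (hmin i h).not_gt hi⟩

section Dichotomy

variable {X : Set (ℤ → A)}

namespace HasSturmianComplexity

variable (hX : HasSturmianComplexity X)

include hX

theorem exists_asymptotic_pair [Finite A] [TopologicalSpace A] [DiscreteTopology A]
    (hXc : IsClosed X) (hXs : shift '' X = X) :
    ∃ x ∈ X, ∃ z ∈ X, EqOn x z (Iio 0) ∧ x 0 ≠ z 0 := by
  set E : Set ((ℤ → A) × (ℤ → A)) := {q | (q.1 ∈ X ∧ q.2 ∈ X) ∧ q.1 0 ≠ q.2 0}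
  have hE : IsClosed E := by
    refine ((hXc.preimage continuous_fst).inter (hXc.preimage continuous_snd)).inter ?_
    exact (isClosed_discrete {c : A × A | c.1 ≠ c.2}).preimage
      (f := fun q : (ℤ → A) × (ℤ → A) => (q.1 0, q.2 0)) (by fun_prop)
  have hI : Monotone fun n : ℕ => Ico (-n : ℤ) 0 := fun m n hmn =>
    Ico_subset_Ico_left (by simpa using hmn)
  obtain ⟨⟨x, z⟩, ⟨⟨hx, hz⟩, h0⟩, hxz⟩ := exists_mem_eqOn_iUnion hE hI fun n => by
    obtain ⟨w, rfl, a, b, hab, ⟨x, hx, i, hi⟩, ⟨y, hy, j, hj⟩⟩ := hX.exists_isRightSpecial n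
    simp only [List.length_append, List.length_singleton, word_succ] at hi hj
    obtain ⟨hwx, hax⟩ := List.append_inj hi (by simp)
    obtain ⟨hwy, hby⟩ := List.append_inj hj (by simp)
    refine ⟨(fun k => x (k + (i + w.length)), fun k => y (k + (j + w.length))),
      ⟨⟨comp_add_mem_of_image_shift_eq hXs hx _, comp_add_mem_of_image_shift_eq hXs hy _⟩, ?_⟩, ?_⟩
    · simpa [List.singleton_inj.1 hax, List.singleton_inj.1 hby] using hab
    · rintro k ⟨hk, hk0⟩
      have hletter := word_eq_word_iff.1 (hwx.trans hwy.symm) (k + w.length).toNat (by omega)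
      simpa [show (((k + w.length).toNat : ℕ) : ℤ) = k + w.length by omega, add_left_comm]
        using hletter
  refine ⟨x, hx, z, hz, fun i hi => hxz (mem_iUnion.2 ⟨i.natAbs, ?_⟩), h0⟩
  simp only [mem_Iio] at hi
  exact ⟨by omega, hi⟩

theorem exists_le_word_eq [Finite A] {x : ℤ → A} (hx : x ∈ X) (hlep : ¬ LeftEventuallyPeriodic x)
    {s : List A} (hs : s ∈ lang X) (c : ℤ) : ∃ i ≤ c, word x i s.length = s := by
  by_contra! hne
  exact hlep ⟨_, s.length.factorial_pos, c, fun i hi => hX.apply_sub_factorial_eq hx hs hne hi⟩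

/-- A prefix of the right half of `y` occurs in `x` to the left of an occurrence of `s`. Reading `x`
and `y` in parallel from there on, the word preceding a first disagreement would be right special,
hence equal to the word preceding position `0` in `x`, which contains `s`. Without a disagreement
`y` runs through the occurrence of `s` in `x`. -/
theorem lang_subset_of_not_leftEventuallyPeriodic [Finite A] {x y : ℤ → A} (hx : x ∈ X)
    (hlep : ¬ LeftEventuallyPeriodic x) (hright : ∀ n : ℕ, IsRightSpecial X (word x (-n) n))
    (hy : y ∈ X) : lang X ⊆ lang {y} := by
  intro s hs
  by_contra hsy
  obtain ⟨a, ha, hsa⟩ := hX.exists_le_word_eq hx hlep hs (-s.length)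
  obtain ⟨N, rfl⟩ : ∃ N : ℕ, a = -N := ⟨a.natAbs, by omega⟩
  obtain ⟨b, hb, hby⟩ := hX.exists_le_word_eq hx hlep (word_mem_lang hy 0 N) (-N)
  rw [length_word] at hby
  have hshadow : ∀ k : ℕ, x (b + k) = y k := fun k => by
    induction k using Nat.strong_induction_on with
    | _ k ih =>
      rcases lt_or_ge k N with hkN | hkN
      · simpa using word_eq_word_iff.1 hby k hkN
      by_contra hne
      obtain ⟨j, rfl⟩ := Nat.exists_eq_add_of_le' hkN
      have hword : word x (b + j) N = word y j N := word_eq_word_iff.2 fun l hl => by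
        simpa [add_assoc] using ih (j + l) (by omega)
      have hspecial := isRightSpecial_word hx hy hword (by simpa [add_assoc] using hne)
      have heq : word x (-N) N = word y j N :=
        (hX.isRightSpecial_unique (hright N) hspecial (by simp)).trans hword
      have hsN : s <:+: word y j N := by
        rw [← heq, ← hsa]
        exact word_infix_word x le_rfl (by omega)
      exact hsy (mem_lang_of_infix hsN (word_mem_lang (mem_singleton y) _ _))
  refine hsy ⟨y, rfl, -N - b, ?_⟩
  rw [← hsa, length_word]
  refine word_eq_word_iff.2 fun k _ => ?_
  have hletter := hshadow (-N - b + k).toNat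
  rwa [Int.toNat_of_nonneg (by omega), show b + (-N - b + k) = -N + k by ring, eq_comm] at hletter

theorem lang_subset_or_exists_leftEventuallyPeriodic [Finite A] [TopologicalSpace A]
    [DiscreteTopology A] (hXc : IsClosed X) (hXs : shift '' X = X) :
    (∀ y ∈ X, lang X ⊆ lang {y}) ∨
      ∃ x ∈ X, LeftEventuallyPeriodic x ∧ ∀ p : ℕ, 0 < p → ¬ Periodic x p := by
  obtain ⟨x, hx, z, hz, hxz, h0⟩ := hX.exists_asymptotic_pair hXc hXs
  by_cases hlep : LeftEventuallyPeriodic x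
  · right
    by_cases hper : ∃ p : ℕ, 0 < p ∧ Periodic x p
    · obtain ⟨p, hp, hpx⟩ := hper
      exact ⟨z, hz, hlep.congr hxz, fun q hq hqz =>
        h0 (apply_zero_eq_of_periodic hp hq hpx hqz hxz)⟩
    · exact ⟨x, hx, hlep, fun p hp hpx => hper ⟨p, hp, hpx⟩⟩
  · left
    have hright : ∀ n : ℕ, IsRightSpecial X (word x (-n) n) := fun n =>
      isRightSpecial_word hx hz
        (word_eq_word_iff.2 fun k hk => hxz (by simp only [mem_Iio]; omega)) (by simpa using h0)
    exact fun y hy => hX.lang_subset_of_not_leftEventuallyPeriodic hx hlep hright hy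

/-- The words of `x` ending just before the first break `m` of its left period `p` are right
special. If `x_{[m-p, m]}` recurs at distance `d` to the right, then `d` is a period from there on:
the word `x_{[m-p, m-p+k)}` preceding a first disagreement would be right special, hence equal to
`x_{[m-k, m)}`, where the letters `0` and `p` agree although `x_{m-p}` and `x_m` differ. -/
theorem rightEventuallyPeriodic [Finite A] {x : ℤ → A} (hx : x ∈ X)
    (hlep : LeftEventuallyPeriodic x) (hper : ∀ p : ℕ, 0 < p → ¬ Periodic x p) :
    RightEventuallyPeriodic x := by
  obtain ⟨p, hp, m, hm, hlt⟩ := hlep.exists_period_break hper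
  have hright : ∀ n : ℕ, IsRightSpecial X (word x (m - n) n) := fun n =>
    isRightSpecial_word hx hx (j := m - p - n)
      (word_eq_word_iff.2 fun k hk => by
        simpa [sub_add_eq_add_sub, sub_right_comm] using (hlt (m - n + k) (by omega)).symm)
      (by simpa using hm.symm)
  by_cases hoccurs : ∃ d : ℕ, 0 < d ∧ word x (m - p + d) (p + 1) = word x (m - p) (p + 1)
  · obtain ⟨d, hd, hword⟩ := hoccurs
    have hfuture : ∀ k : ℕ, x (m - p + d + k) = x (m - p + k) := fun k => by
      induction k using Nat.strong_induction_on with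
      | _ k ih =>
        rcases lt_or_ge k (p + 1) with hkp | hkp
        · exact word_eq_word_iff.1 hword k hkp
        by_contra hne
        have hspecial := isRightSpecial_word hx hx (word_eq_word_iff.2 ih) hne
        have heq := (word_eq_word_iff.2 ih).symm.trans
          (hX.isRightSpecial_unique hspecial (hright k) (by simp))
        rw [word_eq_word_iff] at heq
        refine hm ?_
        calc x (m - p) = x (m - k) := by simpa using heq 0 (by omega)
          _ = x (m - k + p) := by simpa using hlt (m - k + p) (by omega)
          _ = x m := by simpa using (heq p (by omega)).symm
    refine ⟨d, hd, m - p, fun i hi => ?_⟩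
    obtain ⟨k, rfl⟩ := Int.le.dest hi
    rw [add_right_comm, hfuture]
  · push Not at hoccurs
    refine ⟨(p + 1).factorial, (p + 1).factorial_pos, m - p + 1 + (p + 1 : ℕ), fun i hi => ?_⟩
    have hs := word_mem_lang hx (m - p) (p + 1)
    have hperiod := hX.apply_add_factorial_eq hx hs (c := m - p + 1) (i := i)
    simp only [length_word] at hperiod
    refine hperiod (fun j hj => ?_) hi
    obtain ⟨d, hd⟩ := Int.le.dest hj
    simpa [← hd, add_assoc, add_comm (1 : ℤ)] using hoccurs (d + 1) d.succ_pos

theorem lang_eq_lang_singleton [Finite A] {x : ℤ → A} (hx : x ∈ X)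
    (hper : ∀ p : ℕ, 0 < p → ¬ Periodic x p) : lang X = lang {x} := by
  refine Subset.antisymm (fun s hs => not_not.1 fun hsx => ?_) ?_
  · exact hper _ s.length.factorial_pos (hX.periodic_of_notMem_lang hx hs hsx)
  · rintro s ⟨_, rfl, i, hi⟩
    exact ⟨_, hx, i, hi⟩

end HasSturmianComplexity

end Dichotomy

/-! ### `Σ⁰₂` predicates -/

theorem notMem_iff_exists_nodup {α : Type*} {S : Set α} (hS : S.Finite) {a : α} :
    a ∉ S ↔ ∃ l : List α, l.Nodup ∧ l.length = S.ncard ∧ ∀ b ∈ l, b ≠ a ∧ b ∈ S := by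
  classical
  constructor
  · intro ha
    exact ⟨hS.toFinset.toList, Finset.nodup_toList _, by simp [ncard_eq_toFinset_card S hS],
      fun b hb => by
        have hbS : b ∈ S := by simpa using hb
        exact ⟨ne_of_mem_of_not_mem hbS ha, hbS⟩⟩
  · rintro ⟨l, hnodup, hlen, hl⟩ ha
    have hsub : insert a (l.toFinset : Set α) ⊆ S :=
      insert_subset ha fun b hb => (hl b (by simpa using hb)).2
    have hcard := ncard_le_ncard hsub hS
    rw [ncard_insert_of_notMem (by simpa using fun h => (hl a h).1 rfl), ncard_coe_finset,
      List.toFinset_card_of_nodup hnodup] at hcard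
    omega

section SigmaTwo

variable {α κ ι : Type*} [Primcodable α] [Primcodable κ] [Primcodable ι]

/-- Predicates of the form `∃ k, ∀ j, R (a, k, j)` with `R` primitive recursive: the `Σ⁰₂`
predicates on an arbitrary encodable type. -/
def IsSigmaTwo (P : α → Prop) : Prop :=
  ∃ R : α × ℕ × ℕ → Prop, PrimrecPred R ∧ ∀ a, P a ↔ ∃ k, ∀ j, R (a, k, j)

theorem primrecPred_exists_mem_toList_decode {R : α × κ → Prop} (hR : PrimrecPred R) :
    PrimrecPred fun q : α × ℕ => ∃ k ∈ (Encodable.decode (α := κ) q.2).toList, R (q.1, k) :=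
  (PrimrecRel.exists_mem_list (R := fun k a => R (a, k)) (hR.comp (Primrec.pair .snd .fst))).comp
    (Primrec.optionToList.comp (Primrec.decode.comp .snd)) .fst

theorem primrecPred_forall_mem_toList_decode {R : α × κ → Prop} (hR : PrimrecPred R) :
    PrimrecPred fun q : α × ℕ => ∀ k ∈ (Encodable.decode (α := κ) q.2).toList, R (q.1, k) :=
  (PrimrecRel.forall_mem_list (R := fun k a => R (a, k)) (hR.comp (Primrec.pair .snd .fst))).comp
    (Primrec.optionToList.comp (Primrec.decode.comp .snd)) .fst

theorem IsSigmaTwo.of_exists_forall {P : α → Prop} {R : α × κ × ι → Prop} (hR : PrimrecPred R)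
    (hP : ∀ a, P a ↔ ∃ k, ∀ j, R (a, k, j)) : IsSigmaTwo P := by
  have hassoc : Primrec fun q : (α × κ) × ι => (q.1.1, q.1.2, q.2) := by
    exact .pair (.comp .fst .fst) (.pair (.comp .snd .fst) .snd)
  have hinner := primrecPred_forall_mem_toList_decode (hR.comp hassoc)
  have houter := primrecPred_exists_mem_toList_decode (κ := κ)
    (hinner.comp (f := fun q : (α × ℕ) × κ => ((q.1.1, q.2), q.1.2))
      (.pair (.pair (.comp .fst .fst) .snd) (.comp .snd .fst)))
  refine ⟨_, houter.comp (f := fun q : α × ℕ × ℕ => ((q.1, q.2.2), q.2.1))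
    (.pair (.pair .fst (.comp .snd .snd)) (.comp .fst .snd)), fun a => (hP a).trans ⟨?_, ?_⟩⟩
  · rintro ⟨k, hk⟩
    exact ⟨Encodable.encode k, fun j => ⟨k, by simp, fun j' _ => hk j'⟩⟩
  · rintro ⟨k, hk⟩
    obtain ⟨k', hk', -⟩ := hk 0
    refine ⟨k', fun j => ?_⟩
    obtain ⟨k'', hk'', hj⟩ := hk (Encodable.encode j)
    obtain rfl : k' = k'' := by simp_all
    exact hj j (by simp)

theorem IsSigmaTwo.natSigma {P : ℕ → Prop} (hP : IsSigmaTwo P) : NatSigma 2 P := by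
  obtain ⟨R, hR, hPR⟩ := hP
  set S : ℕ → Prop := fun c => R (c.unpair.1.unpair.1, c.unpair.1.unpair.2, c.unpair.2)
  have hS : PrimrecPred S := hR.comp <| by
    have h₁ : Primrec fun c : ℕ => c.unpair.1 := .comp .fst .unpair
    have h₂ : Primrec fun c : ℕ => c.unpair.2 := .comp .snd .unpair
    exact .pair (h₁.comp h₁) (.pair (h₂.comp h₁) h₂)
  refine ⟨fun b => ∀ j, S (Nat.pair b j), ⟨fun c => ¬ S c, ?_, fun b => ?_⟩, fun a => ?_⟩
  · simpa only [NatSigma, not_not] using hS.computablePred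
  · push Not
    rfl
  · simp [S, hPR]

theorem IsSigmaTwo.sigmaLang [Primcodable A] {L : Set (List A)} (hL : IsSigmaTwo (· ∈ L)) :
    SigmaLang 2 L := by
  obtain ⟨R, hR, hLR⟩ := hL
  have hcode : PrimrecPred fun q : ℕ × (List A × ℕ) × ℕ => Encodable.encode q.2.1.1 = q.1 :=
    Primrec.eq.comp (.comp .encode (.comp .fst (.comp .fst .snd))) .fst
  have hmatrix : PrimrecPred fun q : ℕ × (List A × ℕ) × ℕ => R (q.2.1.1, q.2.1.2, q.2.2) :=
    hR.comp (.pair (.comp .fst (.comp .fst .snd))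
      (.pair (.comp .snd (.comp .fst .snd)) (.comp .snd .snd)))
  refine (IsSigmaTwo.of_exists_forall (hcode.and hmatrix) fun m => ?_).natSigma
  simp [hLR, forall_and]

theorem primrecPred_nodup : PrimrecPred (List.Nodup : List α → Prop) := by
  have hne : PrimrecRel fun (i : ℕ) (p : ℕ × List α) => p.2[i]? ≠ p.2[p.1]? :=
    PrimrecPred.not <| Primrec.eq.comp (Primrec.list_getElem?.comp (.comp .snd .snd) .fst)
      (Primrec.list_getElem?.comp (.comp .snd .snd) (.comp .fst .snd))
  have hlt : PrimrecRel fun (j : ℕ) (l : List α) => ∀ i ∈ List.range j, l[i]? ≠ l[j]? :=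
    hne.forall_mem_list.comp (Primrec.list_range.comp .fst) .id
  refine (hlt.forall_mem_list.comp (Primrec.list_range.comp .list_length) .id).of_eq fun l => ?_
  simp only [List.mem_range]
  rw [id, List.nodup_iff_pairwise_ne, List.pairwise_iff_getElem]
  grind

/-- To witness `¬ P a`, list all elements of the fiber of `a` satisfying `P`, each together with a
witness for `P`, and note that `a` is missing; the list is known to be complete by its length. -/
theorem IsSigmaTwo.not_of_ncard_fiber {β : Type*} [Primcodable β] {P : α → Prop} {size : α → β}
    {c : α → ℕ} (hP : IsSigmaTwo P) (hsize : Primrec size) (hc : Primrec c)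
    (hfin : ∀ a, {b | P b ∧ size b = size a}.Finite)
    (hcard : ∀ a, {b | P b ∧ size b = size a}.ncard = c a) : IsSigmaTwo fun a => ¬ P a := by
  obtain ⟨R, hR, hPR⟩ := hP
  set Q : (α × ℕ) → α × ℕ → Prop := fun q aj =>
    q.1 ≠ aj.1 ∧ R (q.1, q.2, aj.2) ∧ size q.1 = size aj.1
  have hQ : PrimrecRel Q :=
    ((Primrec.eq.comp (.comp .fst .fst) (.comp .fst .snd)).not).and <|
      (hR.comp (.pair (.comp .fst .fst) (.pair (.comp .snd .fst) (.comp .snd .snd)))).and <|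
        Primrec.eq.comp (hsize.comp (.comp .fst .fst)) (hsize.comp (.comp .fst .snd))
  have hmatrix : PrimrecPred fun t : α × List (α × ℕ) × ℕ =>
      (t.2.1.map Prod.fst).Nodup ∧ t.2.1.length = c t.1 ∧ ∀ q ∈ t.2.1, Q q (t.1, t.2.2) :=
    (primrecPred_nodup.comp (Primrec.list_map (.comp .fst .snd)
      (Primrec.fst.comp .snd).to₂)).and <|
      (Primrec.eq.comp (Primrec.list_length.comp (.comp .fst .snd)) (hc.comp .fst)).and <|
        hQ.forall_mem_list.comp (.comp .fst .snd) (.pair .fst (.comp .snd .snd))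
  refine .of_exists_forall hmatrix fun a => ?_
  have hnot : ¬ P a ↔ a ∉ {b | P b ∧ size b = size a} := by simp
  rw [hnot, notMem_iff_exists_nodup (hfin a), hcard]
  constructor
  · rintro ⟨l, hnodup, hlen, hl⟩
    choose! k hk using fun b (hb : b ∈ l) => (hPR b).1 (hl b hb).2.1
    refine ⟨l.map fun b => (b, k b), fun j => ⟨?_, by simpa using hlen, ?_⟩⟩
    · simpa [Function.comp_def] using hnodup
    · simpa [Q] using fun b hb => ⟨(hl b hb).1, hk b hb j, (hl b hb).2.2⟩
  · rintro ⟨l, hl⟩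
    refine ⟨l.map Prod.fst, (hl 0).1, by simpa using (hl 0).2.1, ?_⟩
    simp only [List.mem_map, forall_exists_index, and_imp, forall_apply_eq_imp_iff₂]
    exact fun q hq => ⟨((hl 0).2.2 q hq).1,
      (hPR q.1).2 ⟨q.2, fun j => ((hl j).2.2 q hq).2.1⟩, ((hl 0).2.2 q hq).2.2⟩

end SigmaTwo

/-! ### Languages of eventually periodic configurations -/

theorem mem_lang_singleton_iff_exists_infix {x : ℤ → A} {s : List A} :
    s ∈ lang {x} ↔ ∃ N : ℕ, s <:+: word x (-N) (2 * N) := by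
  constructor
  · rintro ⟨_, rfl, i, hi⟩
    exact ⟨i.natAbs + s.length, infix_word_iff.2 ⟨i, by omega, by omega, hi⟩⟩
  · rintro ⟨N, hN⟩
    exact mem_lang_of_infix hN (word_mem_lang (mem_singleton x) _ _)

section Primrec

variable [Primcodable A]

theorem primrecRel_isInfix : PrimrecRel (List.IsInfix : List A → List A → Prop) := by
  have hat : PrimrecRel fun (i : ℕ) (p : List A × List A) => (p.2.drop i).take p.1.length = p.1 :=
    Primrec.eq.comp (Primrec.list_take.comp (Primrec.list_length.comp (.comp .fst .snd))
      (Primrec.list_drop.comp .fst (.comp .snd .snd))) (.comp .fst .snd)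
  refine (hat.exists_mem_list.comp (Primrec.list_range.comp
    (Primrec.succ.comp (Primrec.list_length.comp .snd))) .id).of_eq fun ⟨s, l⟩ => ?_
  simp only [List.mem_range, id]
  constructor
  · rintro ⟨i, -, hi⟩
    rw [← hi]
    exact (List.take_prefix _ _).isInfix.trans (List.drop_suffix _ _).isInfix
  · rintro ⟨u, v, rfl⟩
    exact ⟨u.length, by simp, by simp⟩

theorem primrec_of_eventually_periodic {u : ℕ → A} {p M : ℕ} (hp : 0 < p)
    (hu : ∀ i ≥ M, u (i + p) = u i) : Primrec u := by
  induction M generalizing u with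
  | zero =>
    have hperiodic : Periodic u p := fun i => hu i i.zero_le
    have hlist : Primrec fun i => ((List.range p).map u).getD (i % p) (u 0) :=
      (Primrec.list_getD _).comp (.const _) (Primrec.nat_mod.comp .id (.const p))
    refine hlist.of_eq fun i => ?_
    simp [Nat.mod_lt i hp, hperiodic.map_mod_nat]
  | succ M ih =>
    have htail : Primrec fun i => u (i + 1) := ih fun i hi => by
      simpa only [add_right_comm] using hu (i + 1) (by omega)
    exact (Primrec.nat_casesOn .id (.const (u 0)) (htail.comp .snd).to₂).of_eq fun i => by
      cases i <;> rfl

theorem RightEventuallyPeriodic.primrec {x : ℤ → A} (hx : RightEventuallyPeriodic x) :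
    Primrec fun k : ℕ => x k := by
  obtain ⟨p, hp, m, hm⟩ := hx
  exact primrec_of_eventually_periodic (M := m.toNat) hp fun i hi => by
    simpa using hm i (by omega)

theorem LeftEventuallyPeriodic.primrec {x : ℤ → A} (hx : LeftEventuallyPeriodic x) :
    Primrec fun k : ℕ => x (-k) := by
  obtain ⟨p, hp, m, hm⟩ := hx
  exact primrec_of_eventually_periodic (M := (1 - m).toNat) hp fun i hi => by
    have hshift := hm (-i) (by omega)
    rwa [show (-(i : ℤ) - p) = -((i + p : ℕ) : ℤ) by push_cast; ring] at hshift

theorem primrec_central_word {x : ℤ → A} (hl : LeftEventuallyPeriodic x)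
    (hr : RightEventuallyPeriodic x) : Primrec fun N : ℕ => word x (-N) (2 * N) := by
  have hleft : Primrec fun N : ℕ => (List.range N).map fun k => x (-(N - k : ℕ)) :=
    Primrec.list_map .list_range (hl.primrec.comp (Primrec.nat_sub.comp .fst .snd)).to₂
  have hright : Primrec fun N : ℕ => (List.range N).map fun k : ℕ => x k :=
    Primrec.list_map .list_range (hr.primrec.comp .snd).to₂
  refine (Primrec.list_append.comp hleft hright).of_eq fun N => ?_
  rw [two_mul, ← word_append, neg_add_cancel, word_eq_map, word_eq_map]
  congr 1
  · refine List.map_congr_left fun k hk => ?_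
    rw [List.mem_range] at hk
    congr 1
    omega
  · simp

theorem isSigmaTwo_mem_lang_singleton {x : ℤ → A} (hl : LeftEventuallyPeriodic x)
    (hr : RightEventuallyPeriodic x) : IsSigmaTwo (· ∈ lang {x}) := by
  have hmatrix : PrimrecPred fun q : List A × ℕ × Unit => q.1 <:+: word x (-q.2.1) (2 * q.2.1) :=
    primrecRel_isInfix.comp .fst ((primrec_central_word hl hr).comp (.comp .fst .snd))
  exact .of_exists_forall hmatrix fun s => by simp [mem_lang_singleton_iff_exists_infix]

end Primrec

/-! ### Local rules -/

theorem IsCA.map_comp_add [TopologicalSpace A] {f : (ℤ → A) → (ℤ → A)} (hf : IsCA f)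
    (x : ℤ → A) (a : ℤ) : f (fun i => x (i + a)) = fun i => f x (i + a) := by
  have hshift : ∀ y, f (shift y) = shift (f y) := congrFun hf.2
  have hadd : ∀ b : ℤ, shift (fun i => x (i + b)) = fun i => x (i + (b + 1)) := fun b => by
    funext i
    simp only [shift, add_right_comm, add_assoc]
  induction a using Int.induction_on with
  | zero => simp
  | succ a ih =>
    rw [← hadd, hshift, ih]
    funext i
    simp only [shift, add_right_comm, add_assoc]
  | pred a ih =>
    rw [← sub_add_cancel (-(a : ℤ)) 1, ← hadd, hshift] at ih
    funext i
    simpa [shift, sub_add_eq_add_sub, add_sub_assoc] using congrFun ih (i - 1)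

/-- `g` is a local rule of radius `R` for `f`: the symbol of `f x` in the middle of a window of
length `2 * R + 1` is obtained by applying `g` to the content of the window. -/
def IsLocalRule {R : ℕ} (g : (Fin (2 * R + 1) → A) → A) (f : (ℤ → A) → (ℤ → A)) : Prop :=
  ∀ (x : ℤ → A) (a : ℤ), f x (a + R) = g fun k => x (a + k)

theorem IsCA.exists_apply_zero_eq [Finite A] [TopologicalSpace A] [DiscreteTopology A]
    {f : (ℤ → A) → (ℤ → A)} (hf : IsCA f) :
    ∃ R : ℕ, ∀ x z : ℤ → A, EqOn x z (Icc (-R) R) → f x 0 = f z 0 := by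
  by_contra! h
  have hE : IsClosed {q : (ℤ → A) × (ℤ → A) | f q.1 0 ≠ f q.2 0} :=
    (isClosed_discrete {c : A × A | c.1 ≠ c.2}).preimage
      (f := fun q : (ℤ → A) × (ℤ → A) => (f q.1 0, f q.2 0))
      (((continuous_apply 0).comp (hf.1.comp continuous_fst)).prodMk
        ((continuous_apply 0).comp (hf.1.comp continuous_snd)))
  have hI : Monotone fun n : ℕ => Icc (-n : ℤ) n := fun m n hmn =>
    Icc_subset_Icc (by simpa using hmn) (by simpa using hmn)
  obtain ⟨⟨x, z⟩, hne, hxz⟩ := exists_mem_eqOn_iUnion hE hI fun n => by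
    obtain ⟨x, z, hxz, hne⟩ := h n
    exact ⟨(x, z), hne, hxz⟩
  have heq : x = z := funext fun i =>
    hxz (mem_iUnion.2 ⟨i.natAbs, by simp only [mem_Icc]; omega⟩)
  exact hne (congrArg (f · 0) heq)

theorem IsCA.exists_isLocalRule [Finite A] [TopologicalSpace A] [DiscreteTopology A]
    {f : (ℤ → A) → (ℤ → A)} (hf : IsCA f) :
    ∃ (R : ℕ) (g : (Fin (2 * R + 1) → A) → A), IsLocalRule g f := by
  obtain ⟨R, hR⟩ := hf.exists_apply_zero_eq
  refine ⟨R, fun w => f (fun i => w (Fin.ofNat _ (i + R).toNat)) 0, fun x a => ?_⟩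
  have hcenter := congrFun (hf.map_comp_add x (a + R)) 0
  rw [zero_add] at hcenter
  refine hcenter.symm.trans (hR _ _ fun i hi => ?_)
  rw [mem_Icc] at hi
  simp only [Fin.val_ofNat, Nat.mod_eq_of_lt (show (i + R).toNat < 2 * R + 1 by omega)]
  congr 1
  omega

section BlockMap

variable [Inhabited A] {R : ℕ} {g : (Fin (2 * R + 1) → A) → A} {f : (ℤ → A) → (ℤ → A)}

/-- The action of a local rule of radius `R` on finite words, which shortens a word by `R` letters
on both sides. -/
def blockMap (g : (Fin (2 * R + 1) → A) → A) (u : List A) : List A :=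
  (List.range (u.length - 2 * R)).map fun i => g fun k => u.getD (i + k) default

theorem primrec_blockMap [Finite A] [Primcodable A] (g : (Fin (2 * R + 1) → A) → A) :
    Primrec (blockMap g) := by
  have hwindow : Primrec fun q : List A × ℕ => fun k : Fin (2 * R + 1) =>
      q.1.getD (q.2 + k) default :=
    Primrec.fin_curry.2 <| (Primrec.list_getD _).comp (.comp .fst .fst)
      (Primrec.nat_add.comp (.comp .snd .fst) (Primrec.fin_val.comp .snd))
  exact Primrec.list_map
    (Primrec.list_range.comp (Primrec.nat_sub.comp .list_length (.const _)))
    ((Primrec.dom_finite g).comp hwindow).to₂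

theorem IsLocalRule.blockMap_word (hg : IsLocalRule g f) (x : ℤ → A) (a : ℤ) (n : ℕ) :
    blockMap g (word x a (n + 2 * R)) = word (f x) (a + R) n := by
  rw [blockMap, length_word, Nat.add_sub_cancel, word_eq_map (f x)]
  refine List.map_congr_left fun i hi => ?_
  rw [List.mem_range] at hi
  rw [add_right_comm, hg]
  congr 1
  funext k
  rw [List.getD_eq_getElem _ _ (by rw [length_word]; omega), getElem_word]
  push_cast
  rw [add_assoc]

theorem IsLocalRule.iterate_blockMap_word (hg : IsLocalRule g f) (x : ℤ → A) (a : ℤ) (n t : ℕ) :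
    (blockMap g)^[t] (word x a (n + 2 * (R * t))) = word (f^[t] x) (a + (R * t : ℕ)) n := by
  induction t generalizing x a with
  | zero => simp
  | succ t ih =>
    rw [iterate_succ_apply, iterate_succ_apply,
      show n + 2 * (R * (t + 1)) = n + 2 * (R * t) + 2 * R by ring, hg.blockMap_word, ih]
    congr 1
    push_cast
    ring

theorem IsLocalRule.forall_mem_cylinder_infix_iff (hg : IsLocalRule g f) {s v : List A} {i : ℤ}
    {t : ℕ} : (∀ x ∈ cylinder v i, s <:+: word (f^[t] x) i v.length) ↔
      ∀ a b : List A, a.length = R * t → b.length = R * t →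
        s <:+: (blockMap g)^[t] (a ++ v ++ b) := by
  have hiterate : ∀ x, word (f^[t] x) i v.length =
      (blockMap g)^[t] (word x (i - (R * t : ℕ)) (R * t) ++ word x i v.length ++
        word x (i + v.length) (R * t)) := fun x => by
    have hleft := word_append x (i - (R * t : ℕ)) (R * t) v.length
    have hright := word_append x (i - (R * t : ℕ)) (R * t + v.length) (R * t)
    rw [sub_add_cancel] at hleft
    rw [Nat.cast_add, ← add_assoc, sub_add_cancel] at hright
    rw [hleft, hright, show R * t + v.length + R * t = v.length + 2 * (R * t) by ring,
      hg.iterate_blockMap_word, sub_add_cancel]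
  constructor
  · intro h a b ha hb
    obtain ⟨x, hx⟩ := exists_word_eq (a ++ v ++ b) (i - (R * t : ℕ))
    rw [List.length_append, List.length_append, ← word_append, ← word_append, ha, hb,
      Nat.cast_add, ← add_assoc, sub_add_cancel] at hx
    obtain ⟨hav, hb'⟩ := List.append_inj hx (by simp [ha])
    obtain ⟨ha', hv⟩ := List.append_inj hav (by simp [ha])
    have hinfix := h x hv
    rwa [hiterate, ha', hv, hb'] at hinfix
  · intro h x hx
    rw [hiterate, show word x i v.length = v from hx]
    exact h _ _ (length_word ..) (length_word ..)

end BlockMap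

/-! ### Generic limit sets -/

section Generic

variable [TopologicalSpace A] {f : (ℤ → A) → (ℤ → A)}

theorem isClosed_genLimitSet (f : (ℤ → A) → (ℤ → A)) : IsClosed (genLimitSet f) :=
  isClosed_sInter fun _ hC => hC.1

theorem mapsTo_genLimitSet (h : (ℤ → A) ≃ₜ (ℤ → A)) (hcomm : Function.Commute h f) :
    MapsTo h (genLimitSet f) (genLimitSet f) := by
  rintro x hx C ⟨hC, hres⟩
  refine hx (h ⁻¹' C) ⟨hC.preimage h.continuous, ?_⟩
  filter_upwards [tendsto_residual_of_isOpenMap h.continuous h.isOpenMap hres] with y hy z hz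
  refine hy ?_
  have horbit : (fun t => f^[t] (h y)) = h ∘ fun t => f^[t] y :=
    funext fun t => ((hcomm.iterate_right t) y).symm
  simpa only [omegaSet, mem_ofPred_eq, horbit] using hz.continuousAt_comp h.continuous.continuousAt

theorem IsCA.image_shift_genLimitSet (hf : IsCA f) : shift '' genLimitSet f = genLimitSet f := by
  let h : (ℤ → A) ≃ₜ (ℤ → A) := (Homeomorph.piCongrLeft (Y := fun _ => A) (Equiv.addRight 1)).symm
  have hshift : ⇑h = shift := rfl
  have hcomm : Function.Commute h f := fun x => congrFun hf.2.symm x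
  have hcomm_symm : Function.Commute h.symm f :=
    Semiconj.inverse_left hcomm h.symm_apply_apply h.apply_symm_apply
  rw [← hshift]
  exact (mapsTo_genLimitSet h hcomm).image_subset.antisymm fun x hx =>
    ⟨h.symm x, mapsTo_genLimitSet h.symm hcomm_symm hx, h.apply_symm_apply x⟩

theorem eventually_iterate_mem_residual [CompactSpace A] {V : Set (ℤ → A)} (hV : IsOpen V)
    (hsub : genLimitSet f ⊆ V) : ∀ᶠ x in residual (ℤ → A), ∀ᶠ t in atTop, f^[t] x ∈ V := by
  set S : Set (Set (ℤ → A)) := {C | IsClosed C ∧ realm f C ∈ residual (ℤ → A)}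
  have hcover : Vᶜ ⊆ ⋃ C : S, (C : Set (ℤ → A))ᶜ := by
    rwa [← compl_iInter, ← sInter_eq_iInter, compl_subset_compl]
  have hcompact : IsCompact Vᶜ := hV.isClosed_compl.isCompact
  obtain ⟨F, hF⟩ := hcompact.elim_finite_subcover _ (fun C : S => C.2.1.isOpen_compl) hcover
  have hrealms : ∀ᶠ x in residual (ℤ → A), ∀ C ∈ F, x ∈ realm f C :=
    (Filter.eventually_all_finset F).2 fun C _ => C.2.2
  filter_upwards [hrealms] with x hx
  by_contra hfreq
  obtain ⟨y, hyV, hy⟩ := hcompact.exists_mapClusterPt_of_frequently (not_eventually.1 hfreq)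
  obtain ⟨C, hC, hyC⟩ := mem_iUnion₂.1 (hF hyV)
  exact hyC (hx C hC hy)

theorem exists_nonempty_interior_of_eventually {Y : Type*} [TopologicalSpace Y] [BaireSpace Y]
    [Nonempty Y] {G : ℕ → Set Y} (hG : ∀ n, IsClosed (G n))
    (h : ∀ᶠ x in residual Y, ∃ n, x ∈ G n) : ∃ n, (interior (G n)).Nonempty := by
  by_contra! hempty
  have hcompl : ∀ᶠ x in residual Y, ∀ n, x ∉ G n := eventually_countable_forall.2 fun n =>
    residual_of_dense_open (hG n).isOpen_compl (interior_eq_empty_iff_dense_compl.1 (hempty n))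
  obtain ⟨x, ⟨n, hn⟩, hx⟩ := (dense_of_mem_residual (h.and hcompl)).nonempty
  exact hx n hn

theorem exists_nonempty_interior_iterate_mem [CompactSpace A] [T2Space A] [Nonempty A]
    (hf : Continuous f) {V : Set (ℤ → A)} (hV : IsClopen V) (hsub : genLimitSet f ⊆ V) :
    ∃ T, (interior {x | ∀ t ≥ T, f^[t] x ∈ V}).Nonempty := by
  refine exists_nonempty_interior_of_eventually (fun T => ?_) ?_
  · simp only [ofPred_forall]
    exact isClosed_iInter fun t => isClosed_iInter fun _ => hV.isClosed.preimage (hf.iterate t)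
  · simpa only [eventually_atTop, mem_ofPred_eq] using
      eventually_iterate_mem_residual hV.isOpen hsub

theorem exists_cylinder_subset [DiscreteTopology A] {U : Set (ℤ → A)} (hU : IsOpen U)
    {z : ℤ → A} (hz : z ∈ U) (N : ℕ) :
    ∃ M ≥ N, cylinder (word z (-M) (2 * M)) (-M) ⊆ U := by
  obtain ⟨I, u, hu, hIU⟩ := isOpen_pi_iff.1 hU z hz
  refine ⟨max N (I.sup Int.natAbs + 1), le_max_left _ _, fun x hx => hIU fun i hi => ?_⟩
  set M := max N (I.sup Int.natAbs + 1)
  have hiM : i.natAbs ≤ I.sup Int.natAbs := Finset.le_sup hi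
  have hxz : word x (-M) (2 * M) = word z (-M) (2 * M) := by simpa [cylinder] using hx
  have hi' : x i = z i := by
    simpa [show ((i + M).toNat : ℤ) = i + M by omega] using
      word_eq_word_iff.1 hxz (i + M).toNat (by omega)
  exact hi' ▸ (hu i hi).2

theorem exists_window_of_isCompact [DiscreteTopology A] {X : Set (ℤ → A)} (hX : IsCompact X)
    {s : List A} (hs : ∀ y ∈ X, s ∈ lang {y}) : ∃ N : ℕ, ∀ y ∈ X, s <:+: word y (-N) (2 * N) := by
  have hmono : Monotone fun N : ℕ => {y : ℤ → A | s <:+: word y (-N) (2 * N)} :=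
    fun m n hmn y hy => hy.trans (word_infix_word y (by omega) (by omega))
  exact hX.elim_directed_cover (fun N : ℕ => {y : ℤ → A | s <:+: word y (-N) (2 * N)})
    (fun N => (isClopen_setOf_word (s <:+: ·) (-N) (2 * N)).isOpen)
    (fun y hy => mem_iUnion.2 (mem_lang_singleton_iff_exists_infix.1 (hs y hy)))
    hmono.directed_le

theorem exists_cylinder_of_forall_mem_lang [Finite A] [DiscreteTopology A] [Nonempty A]
    (hf : Continuous f) {s : List A} (hs : ∀ y ∈ genLimitSet f, s ∈ lang {y}) :
    ∃ (v : List A) (i : ℤ) (T : ℕ), ∀ t ≥ T, ∀ x ∈ cylinder v i,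
      s <:+: word (f^[t] x) i v.length := by
  obtain ⟨N, hN⟩ := exists_window_of_isCompact (isClosed_genLimitSet f).isCompact hs
  obtain ⟨T, z, hz⟩ := exists_nonempty_interior_iterate_mem hf
    (isClopen_setOf_word (s <:+: ·) (-N) (2 * N)) hN
  obtain ⟨M, hNM, hM⟩ := exists_cylinder_subset isOpen_interior hz N
  refine ⟨word z (-M) (2 * M), -M, T, fun t ht x hx => ?_⟩
  rw [length_word]
  exact (interior_subset (hM hx) t ht).trans (word_infix_word _ (by omega) (by omega))

theorem mem_lang_genLimitSet_of_cylinder [Finite A] [DiscreteTopology A] [Nonempty A]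
    {s v : List A} {i : ℤ} {T : ℕ}
    (h : ∀ t ≥ T, ∀ x ∈ cylinder v i, s <:+: word (f^[t] x) i v.length) :
    s ∈ lang (genLimitSet f) := by
  by_contra hs
  have hres := eventually_iterate_mem_residual (f := f)
    (isClopen_setOf_word (¬ s <:+: ·) i v.length).isOpen fun y hy hinfix =>
      hs (mem_lang_of_infix hinfix (word_mem_lang hy _ _))
  obtain ⟨x, hxv, hx⟩ := (dense_of_mem_residual hres).inter_open_nonempty (cylinder v i)
    (isClopen_setOf_word (· = v) i v.length).isOpen (exists_word_eq v i)
  obtain ⟨t, ht, hTt⟩ := (hx.and (eventually_ge_atTop T)).exists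
  exact ht (h t hTt x hxv)

/-- A word of the language is characterised by a cylinder on which it eventually cannot be avoided.
Avoiding it at time `t` only depends on the `R * t` letters on either side of the cylinder, where
`R` is the radius of the automaton. -/
theorem isSigmaTwo_mem_lang_genLimitSet_of_forall_subset [Finite A] [DiscreteTopology A]
    [Nonempty A] [Primcodable A] (hf : IsCA f)
    (hmin : ∀ y ∈ genLimitSet f, lang (genLimitSet f) ⊆ lang {y}) :
    IsSigmaTwo (· ∈ lang (genLimitSet f)) := by
  inhabit A
  obtain ⟨R, g, hg⟩ := hf.exists_isLocalRule
  have htime : Primrec fun q : List A × (List A × ℕ) × ℕ × List A × List A => q.2.2.1 :=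
    .comp .fst (.comp .snd .snd)
  have hleft : Primrec fun q : List A × (List A × ℕ) × ℕ × List A × List A => q.2.2.2.1 :=
    .comp .fst (.comp .snd (.comp .snd .snd))
  have hright : Primrec fun q : List A × (List A × ℕ) × ℕ × List A × List A => q.2.2.2.2 :=
    .comp .snd (.comp .snd (.comp .snd .snd))
  have hmargin := Primrec.nat_mul.comp (.const R) htime
  have hguard := (Primrec.nat_le.comp (.comp .snd (.comp .fst .snd)) htime).and <|
    (Primrec.eq.comp (Primrec.list_length.comp hleft) hmargin).and <|
      Primrec.eq.comp (Primrec.list_length.comp hright) hmargin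
  have hinfix := primrecRel_isInfix.comp .fst <| Primrec.nat_iterate htime
    (Primrec.list_append.comp
      (Primrec.list_append.comp hleft (.comp .fst (.comp .fst .snd))) hright)
    ((primrec_blockMap g).comp .snd).to₂
  refine .of_exists_forall (hguard.not.or hinfix) fun s => ?_
  calc s ∈ lang (genLimitSet f)
      ↔ ∃ (v : List A) (i : ℤ) (T : ℕ), ∀ t ≥ T, ∀ x ∈ cylinder v i,
          s <:+: word (f^[t] x) i v.length :=
        ⟨fun hs => exists_cylinder_of_forall_mem_lang hf.1 fun y hy => hmin y hy hs,
          fun ⟨_, _, _, h⟩ => mem_lang_genLimitSet_of_cylinder h⟩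
    _ ↔ _ := by
      simp only [hg.forall_mem_cylinder_infix_iff, exists_const, Prod.exists, Prod.forall,
        ← imp_iff_not_or, and_imp]
      exact exists₂_congr fun v T =>
        ⟨fun h t a b ht => h t ht a b, fun h t ht a b => h t a b ht⟩

end Generic

theorem HasSturmianComplexity.isSigmaTwo_mem_lang_genLimitSet [Finite A] [Primcodable A]
    [TopologicalSpace A] [DiscreteTopology A] {f : (ℤ → A) → (ℤ → A)} (hf : IsCA f)
    (hX : HasSturmianComplexity (genLimitSet f)) : IsSigmaTwo (· ∈ lang (genLimitSet f)) := by
  obtain ⟨-, -, a, -⟩ := hX.exists_isRightSpecial 0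
  have : Nonempty A := ⟨a⟩
  rcases hX.lang_subset_or_exists_leftEventuallyPeriodic (isClosed_genLimitSet f)
    hf.image_shift_genLimitSet with hmin | ⟨x, hx, hleft, hper⟩
  · exact isSigmaTwo_mem_lang_genLimitSet_of_forall_subset hf hmin
  · rw [hX.lang_eq_lang_singleton hx hper]
    exact isSigmaTwo_mem_lang_singleton hleft (hX.rightEventuallyPeriodic hx hleft hper)

theorem HasSturmianComplexity.isSigmaTwo_notMem_lang [Primcodable A] {X : Set (ℤ → A)}
    (hX : HasSturmianComplexity X) (hL : IsSigmaTwo (· ∈ lang X)) : IsSigmaTwo (· ∉ lang X) :=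
  hL.not_of_ncard_fiber .list_length (Primrec.succ.comp .list_length)
    (fun w => hX.finite w.length) fun w => hX w.length

theorem stmt14_general [Finite A] [Primcodable A] [TopologicalSpace A] [DiscreteTopology A]
    {f : (ℤ → A) → (ℤ → A)} (hf : IsCA f) (hX : HasSturmianComplexity (genLimitSet f)) :
    SigmaLang 2 (lang (genLimitSet f)) ∧ PiLang 2 (lang (genLimitSet f)) := by
  have hL := hX.isSigmaTwo_mem_lang_genLimitSet hf
  exact ⟨hL.sigmaLang, (hX.isSigmaTwo_notMem_lang hL).sigmaLang⟩

/-- if a Sturmian shift (a subshift with exactly `n + 1` words of length `n`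
for every `n`) is the generic limit set of some CA, then its language is `Δ⁰₂`. -/
theorem stmt14 (X : Set (ℤ → Fin 2)) (hXc : IsClosed X) (hXs : shift '' X = X)
    (hSturm : ∀ n : ℕ, {w ∈ lang X | w.length = n}.ncard = n + 1)
    (hgen : ∃ f : (ℤ → Fin 2) → (ℤ → Fin 2), IsCA f ∧ genLimitSet f = X) :
    SigmaLang 2 (lang X) ∧ PiLang 2 (lang X) := by
  obtain ⟨f, hf, rfl⟩ := hgen
  exact stmt14_general hf hSturm

end Gls
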